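/- arXiv:2603.17772 — 2 statements merged into one kernel-verified Lean document; each statement's English description precedes it below -/
import Mathlib

section
/- Let n ≥ 3. If a social choice function f : S₀ⁿ → A is onto and pairwise strategy-proof, then f is efficient; in particular, for every profile R ≠ R^{0N}, f(R) ∈ [τ̲(R), τ̄(R)]. -/
/-- The set of alternatives: the closed interval [0,1]. -/
abbrev A : Type := Set.Icc (0:ℝ) 1

def zeroA : A := ⟨0, by constructor <;> norm_num⟩
def oneA : A := ⟨1, by constructor <;> norm_num⟩

/-- A preference: a complete (total) and transitive binary relation on A. -/
structure Pref : Type where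
  rel : A → A → Prop
  total : ∀ a b : A, rel a b ∨ rel b a
  trans : ∀ a b c : A, rel a b → rel b c → rel a c

/-- Strict part of a preference. -/
def Pref.P (R : Pref) (a b : A) : Prop := R.rel a b ∧ ¬ R.rel b a

/-- `p` is a peak of `R`: `R` is single-peaked with peak `p`. -/
def Pref.IsPeak (R : Pref) (p : A) : Prop :=
  ∀ a b : A, ((p ≤ a ∧ a < b) ∨ (b < a ∧ a ≤ p)) → R.P a b

/-- Single-peaked preferences. -/
def SinglePeaked (R : Pref) : Prop := ∃ p : A, R.IsPeak p

/-- The completely indifferent preference R⁰. -/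
def R0 : Pref :=
  ⟨fun _ _ => True, fun _ _ => Or.inl trivial, fun _ _ _ _ _ => trivial⟩

/-- The augmented domain S₀ = S ∪ {R⁰}. -/
def S0 : Type := {R : Pref // SinglePeaked R ∨ R = R0}

/-- The completely indifferent profile R^{0N}. -/
def indiffProfile (n : ℕ) : Fin n → S0 := fun _ => ⟨R0, Or.inr rfl⟩

open Classical in
/-- The peak of a single-peaked preference (junk value `zeroA` otherwise). -/
noncomputable def peak (R : Pref) : A :=
  if h : SinglePeaked R then h.choose else zeroA

/-- τ̲(R): the smallest peak among non-indifferent agents (as a real number). -/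
noncomputable def tmin {n : ℕ} (R : Fin n → S0) : ℝ :=
  sInf {x : ℝ | ∃ i : Fin n, (R i).1 ≠ R0 ∧ ((peak (R i).1 : ℝ) = x)}

/-- τ̄(R): the largest peak among non-indifferent agents (as a real number). -/
noncomputable def tmax {n : ℕ} (R : Fin n → S0) : ℝ :=
  sSup {x : ℝ | ∃ i : Fin n, (R i).1 ≠ R0 ∧ ((peak (R i).1 : ℝ) = x)}

/-- Onto-ness. -/
def Onto {n : ℕ} (f : (Fin n → S0) → A) : Prop := ∀ a : A, ∃ R : Fin n → S0, f R = a

/-- (Individual) strategy-proofness. -/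
def StrategyProof {n : ℕ} (f : (Fin n → S0) → A) : Prop :=
  ∀ (R : Fin n → S0) (i : Fin n) (Ri' : S0),
    (R i).1.rel (f R) (f (Function.update R i Ri'))

/-- No profitable deviation by the coalition `S`. -/
def CoalitionSP {n : ℕ} (f : (Fin n → S0) → A) (S : Finset (Fin n)) : Prop :=
  ¬ ∃ R R' : Fin n → S0,
      (∀ i ∉ S, R' i = R i) ∧
      (∀ i ∈ S, (R i).1.rel (f R') (f R)) ∧
      (∃ j ∈ S, (R j).1.P (f R') (f R))

/-- Group strategy-proofness. -/
def GroupSP {n : ℕ} (f : (Fin n → S0) → A) : Prop :=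
  ∀ S : Finset (Fin n), S.Nonempty → CoalitionSP f S

/-- Pairwise strategy-proofness. -/
def PairwiseSP {n : ℕ} (f : (Fin n → S0) → A) : Prop :=
  ∀ S : Finset (Fin n), S.Nonempty → S.card ≤ 2 → CoalitionSP f S

/-- No deviation making every member of `S` strictly better off. -/
def WeakCoalitionSP {n : ℕ} (f : (Fin n → S0) → A) (S : Finset (Fin n)) : Prop :=
  ¬ ∃ R R' : Fin n → S0,
      (∀ i ∉ S, R' i = R i) ∧
      (∀ i ∈ S, (R i).1.P (f R') (f R))

/-- Weak group strategy-proofness. -/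
def WeakGroupSP {n : ℕ} (f : (Fin n → S0) → A) : Prop :=
  ∀ S : Finset (Fin n), S.Nonempty → WeakCoalitionSP f S

/-- `a` is efficient at the profile `R`. -/
def EfficientAt {n : ℕ} (R : Fin n → S0) (a : A) : Prop :=
  ¬ ∃ b : A, b ≠ a ∧ (∀ i : Fin n, (R i).1.rel b a) ∧ (∃ j : Fin n, (R j).1.P b a)

/-- Efficiency of a social choice function. -/
def Efficient {n : ℕ} (f : (Fin n → S0) → A) : Prop := ∀ R : Fin n → S0, EfficientAt R (f R)

/-- The tops-only property. -/
def TopsOnly {n : ℕ} (f : (Fin n → S0) → A) : Prop :=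
  ∀ R R' : Fin n → S0,
    (∀ i : Fin n, (R i).1 = R0 ↔ (R' i).1 = R0) →
    (∀ i : Fin n, (R i).1 ≠ R0 → peak (R i).1 = peak (R' i).1) →
    f R = f R'

/-- Target rules with a default. -/
def IsTargetRule {n : ℕ} (f : (Fin n → S0) → A) : Prop :=
  ∃ x y : A, f (indiffProfile n) = y ∧
    ∀ R : Fin n → S0, R ≠ indiffProfile n →
      ((tmin R ≤ (x : ℝ) ∧ (x : ℝ) ≤ tmax R) → f R = x) ∧
      ((x : ℝ) < tmin R → (f R : ℝ) = tmin R) ∧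
      (tmax R < (x : ℝ) → (f R : ℝ) = tmax R)

theorem aux_sp {n : ℕ} {f : (Fin n → S0) → A} (h : PairwiseSP f) (R : Fin n → S0) (i : Fin n)
    (Q : S0) : (R i).1.rel (f R) (f (Function.update R i Q)) := by
  by_contra hc
  apply h {i} (by simp) (by simp)
  refine ⟨R, Function.update R i Q, ?_, ?_, ?_⟩
  · intro j hj
    simp at hj
    simp [Function.update_of_ne hj]
  · intro j hj
    simp at hj
    subst hj
    exact ((R j).1.total _ _).resolve_left hc
  · exact ⟨i, by simp, ((R i).1.total _ _).resolve_left hc, hc⟩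

theorem aux_eq_peak {R : Pref} {p x : A} (h : R.IsPeak p) (hx : R.rel x p) : x = p := by
  rcases lt_trichotomy x p with h1 | h1 | h1
  · exact absurd hx (h p x (Or.inr ⟨h1, le_rfl⟩)).2
  · exact h1
  · exact absurd hx (h p x (Or.inl ⟨le_rfl, h1⟩)).2

/-- A preference represented by a utility function. -/
def utilPref (u : A → ℝ) : Pref :=
  ⟨fun a b => u b ≤ u a, fun _ _ => le_total _ _, fun _ _ _ h1 h2 => le_trans h2 h1⟩

theorem utilPref_P (u : A → ℝ) (a b : A) : (utilPref u).P a b ↔ u b < u a := by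
  simp only [Pref.P, utilPref]
  constructor
  · rintro ⟨_, h⟩; exact not_le.mp h
  · intro h; exact ⟨h.le, not_le.mpr h⟩

/-- Peak `t`, everything on the right preferred to everything on the left. -/
theorem exists_right (t : A) : ∃ Q : S0, Q.1.IsPeak t ∧ ∀ a x : A, t ≤ a → x < t → Q.1.P a x := by
  classical
  let u : A → ℝ := fun x => if t ≤ x then -(x:ℝ) else (x:ℝ) - 5
  have hp : (utilPref u).IsPeak t := by
    intro a b hab
    rw [utilPref_P]
    have ha := a.2.1; have ha' := a.2.2; have hb := b.2.1; have hb' := b.2.2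
    rcases hab with ⟨h1, h2⟩ | ⟨h1, h2⟩
    · have h2' : (a:ℝ) < b := h2
      simp only [u, if_pos h1, if_pos (h1.trans h2.le)]; linarith
    · have h1' : (b:ℝ) < a := h1
      simp only [u, if_neg (not_le.mpr (h1.trans_le h2))]
      split_ifs <;> linarith
  refine ⟨⟨utilPref u, Or.inl ⟨t, hp⟩⟩, hp, ?_⟩
  intro a x h1 h2
  rw [utilPref_P]
  have ha' := a.2.2; have hb' := x.2.2
  simp only [u, if_pos h1, if_neg (not_le.mpr h2)]; linarith

/-- Peak `t`, everything on the left preferred to everything on the right. -/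
theorem exists_left (t : A) : ∃ Q : S0, Q.1.IsPeak t ∧ ∀ a x : A, a ≤ t → t < x → Q.1.P a x := by
  classical
  let u : A → ℝ := fun x => if x ≤ t then (x:ℝ) else -(x:ℝ) - 5
  have hp : (utilPref u).IsPeak t := by
    intro a b hab
    rw [utilPref_P]
    have ha := a.2.1; have ha' := a.2.2; have hb := b.2.1; have hb' := b.2.2
    rcases hab with ⟨h1, h2⟩ | ⟨h1, h2⟩
    · have h2' : (a:ℝ) < b := h2
      simp only [u, if_neg (not_le.mpr (h1.trans_lt h2))]
      split_ifs <;> linarith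
    · have h1' : (b:ℝ) < a := h1
      simp only [u, if_pos h2, if_pos (h1.le.trans h2)]; linarith
  refine ⟨⟨utilPref u, Or.inl ⟨t, hp⟩⟩, hp, ?_⟩
  intro a x h1 h2
  rw [utilPref_P]
  have ha' := a.2.1; have hb' := x.2.1
  simp only [u, if_pos h1, if_neg (not_le.mpr h2)]; linarith

/-- Step-by-step replacement of agents' preferences. -/
theorem aux_replace {n : ℕ} {f : (Fin n → S0) → A} (R R' : Fin n → S0) (a : A) (hR : f R = a)
    (step : ∀ (V : Fin n → S0) (i : Fin n), V i = R i → f V = a →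
      f (Function.update V i (R' i)) = a) : f R' = a := by
  classical
  have key : ∀ T : Finset (Fin n), f (fun i => if i ∈ T then R' i else R i) = a := by
    intro T
    induction T using Finset.induction_on with
    | empty => simpa using hR
    | insert i T hi ih =>
      have := step _ i (by simp [hi]) ih
      rw [← this]
      congr 1
      funext j
      by_cases hj : j = i
      · subst hj; simp
      · simp [hj]
  simpa using key Finset.univ

theorem aux_unan {n : ℕ} {f : (Fin n → S0) → A} (hO : Onto f) (h : PairwiseSP f) (t : A) (Q : S0)
    (hQ : Q.1.IsPeak t) : f (fun _ => Q) = t := by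
  obtain ⟨R, hR⟩ := hO t
  refine aux_replace R _ t hR ?_
  intro V i _ hV
  have := aux_sp h (Function.update V i Q) i (V i)
  simp [hV] at this
  exact aux_eq_peak hQ this

theorem aux_unan0 {n : ℕ} {f : (Fin n → S0) → A} (hO : Onto f) (h : PairwiseSP f) (t : A) (Q : S0)
    (hQ : Q.1.IsPeak t) (k : Fin n) (R' : Fin n → S0) (hk : R' k = Q)
    (hR' : ∀ i, R' i = Q ∨ (R' i).1 = R0) : f R' = t := by
  classical
  have key : ∀ T : Finset (Fin n), f (fun i => if i ∈ T then R' i else Q) = t := by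
    intro T
    induction T using Finset.induction_on with
    | empty => simpa using aux_unan hO h t Q hQ
    | insert i T hi ih =>
      rcases hR' i with hq | h0
      · rw [← ih]
        congr 1
        funext j
        by_cases hj : j = i
        · subst hj; simp [hq]
        · simp [hj]
      · have hki : (fun j => if j ∈ insert i T then R' j else Q) k = Q := by
          simp [hk]
        apply aux_eq_peak hQ
        by_contra hc
        have hPk : Q.1.rel t (f (fun j => if j ∈ insert i T then R' j else Q)) :=
          (Q.1.total _ _).resolve_left hc
        apply h {i, k} (by simp) Finset.card_le_two
        refine ⟨fun j => if j ∈ insert i T then R' j else Q, fun j => if j ∈ T then R' j else Q,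
          ?_, ?_, ?_⟩
        · intro j hj
          simp at hj
          simp [hj.1]
        · intro j hj
          rw [ih]
          simp only [Finset.mem_insert, Finset.mem_singleton] at hj
          rcases hj with rfl | rfl
          · simp only [Finset.mem_insert_self, if_true]
            rw [h0]; trivial
          · rw [hki]; exact hPk
        · refine ⟨k, by simp, ?_⟩
          rw [hki, ih]
          exact ⟨hPk, hc⟩
  simpa using key Finset.univ

theorem aux_peak {Q : S0} (h : Q.1 ≠ R0) : Q.1.IsPeak (peak Q.1) := by
  have hs : SinglePeaked Q.1 := Q.2.resolve_right h
  unfold peak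
  rw [dif_pos hs]
  exact hs.choose_spec

theorem aux_upper {n : ℕ} {f : (Fin n → S0) → A} (hO : Onto f) (h : PairwiseSP f)
    (R : Fin n → S0) (hne : ∃ i, (R i).1 ≠ R0) : ∃ i, (R i).1 ≠ R0 ∧ f R ≤ peak (R i).1 := by
  classical
  by_contra hc
  push Not at hc
  obtain ⟨i0, hi0⟩ := hne
  obtain ⟨k, hk, hmax⟩ := Finset.exists_max_image
    (Finset.univ.filter fun i => (R i).1 ≠ R0) (fun i => peak (R i).1) ⟨i0, by simp [hi0]⟩
  simp at hk hmax
  have hka := hc k hk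
  obtain ⟨Q, hQ, hQa⟩ := exists_right (peak (R k).1)
  let R' : Fin n → S0 := fun i => if (R i).1 = R0 then R i else Q
  have h1 : f R' = peak (R k).1 := by
    refine aux_unan0 hO h _ Q hQ k R' (by simp [R', hk]) ?_
    intro i
    by_cases hi : (R i).1 = R0 <;> simp [R', hi]
  have h2 : f R' = f R := by
    refine aux_replace R R' _ rfl ?_
    intro V i hVi hV
    by_cases hi : (R i).1 = R0
    · have e : R' i = V i := by simp [R', hi, hVi]
      rw [e, Function.update_eq_self]; exact hV
    · have e : R' i = Q := by simp [R', hi]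
      rw [e]
      have s1 := aux_sp h V i Q
      have s2 := aux_sp h (Function.update V i Q) i (V i)
      simp only [Function.update_self, Function.update_idem, Function.update_eq_self, hV] at s2
      rw [hV, hVi] at s1
      set a' := f (Function.update V i Q)
      have hta : peak (R k).1 ≤ a' := by
        by_contra hlt
        exact (hQa _ a' hka.le (not_le.mp hlt)).2 s2
      rcases lt_trichotomy a' (f R) with hl | hl | hl
      · exact absurd s1 (aux_peak hi a' (f R) (Or.inl ⟨(hmax i hi).trans hta, hl⟩)).2
      · exact hl
      · exact absurd s2 (hQ (f R) a' (Or.inl ⟨hka.le, hl⟩)).2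
  rw [← h2, h1] at hka
  exact lt_irrefl _ hka

theorem aux_lower {n : ℕ} {f : (Fin n → S0) → A} (hO : Onto f) (h : PairwiseSP f)
    (R : Fin n → S0) (hne : ∃ i, (R i).1 ≠ R0) : ∃ i, (R i).1 ≠ R0 ∧ peak (R i).1 ≤ f R := by
  classical
  by_contra hc
  push Not at hc
  obtain ⟨i0, hi0⟩ := hne
  obtain ⟨k, hk, hmin⟩ := Finset.exists_min_image
    (Finset.univ.filter fun i => (R i).1 ≠ R0) (fun i => peak (R i).1) ⟨i0, by simp [hi0]⟩
  simp at hk hmin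
  have hka := hc k hk
  obtain ⟨Q, hQ, hQa⟩ := exists_left (peak (R k).1)
  let R' : Fin n → S0 := fun i => if (R i).1 = R0 then R i else Q
  have h1 : f R' = peak (R k).1 := by
    refine aux_unan0 hO h _ Q hQ k R' (by simp [R', hk]) ?_
    intro i
    by_cases hi : (R i).1 = R0 <;> simp [R', hi]
  have h2 : f R' = f R := by
    refine aux_replace R R' _ rfl ?_
    intro V i hVi hV
    by_cases hi : (R i).1 = R0
    · have e : R' i = V i := by simp [R', hi, hVi]
      rw [e, Function.update_eq_self]; exact hV
    · have e : R' i = Q := by simp [R', hi]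
      rw [e]
      have s1 := aux_sp h V i Q
      have s2 := aux_sp h (Function.update V i Q) i (V i)
      simp only [Function.update_self, Function.update_idem, Function.update_eq_self, hV] at s2
      rw [hV, hVi] at s1
      set a' := f (Function.update V i Q)
      have hta : a' ≤ peak (R k).1 := by
        by_contra hlt
        exact (hQa _ a' hka.le (not_le.mp hlt)).2 s2
      rcases lt_trichotomy a' (f R) with hl | hl | hl
      · exact absurd s2 (hQ (f R) a' (Or.inr ⟨hl, hka.le⟩)).2
      · exact hl
      · exact absurd s1 (aux_peak hi a' (f R) (Or.inr ⟨hl, hta.trans (hmin i hi)⟩)).2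
  rw [← h2, h1] at hka
  exact lt_irrefl _ hka

/-- For n ≥ 3, every onto and pairwise strategy-proof SCF is
efficient; in particular, for every profile R ≠ R^{0N},
f(R) ∈ [τ̲(R), τ̄(R)]. -/
theorem stmt_6 (n : ℕ) (hn : 3 ≤ n) (f : (Fin n → S0) → A)
    (hOnto : Onto f) (hPSP : PairwiseSP f) :
    Efficient f ∧
      ∀ R : Fin n → S0, R ≠ indiffProfile n →
        tmin R ≤ (f R : ℝ) ∧ (f R : ℝ) ≤ tmax R := by
  refine ⟨?_, ?_⟩
  · rintro R ⟨b, hb, hall, j, hj⟩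
    have hne : ∃ i, (R i).1 ≠ R0 := by
      refine ⟨j, fun h0 => ?_⟩
      rw [h0] at hj
      exact hj.2 trivial
    rcases lt_or_gt_of_ne hb with hlt | hlt
    · obtain ⟨i, hi, hle⟩ := aux_upper hOnto hPSP R hne
      exact (aux_peak hi _ _ (Or.inr ⟨hlt, hle⟩)).2 (hall i)
    · obtain ⟨i, hi, hle⟩ := aux_lower hOnto hPSP R hne
      exact (aux_peak hi _ _ (Or.inl ⟨hle, hlt⟩)).2 (hall i)
  · intro R hR
    have hne : ∃ i, (R i).1 ≠ R0 := by
      by_contra hc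
      push Not at hc
      exact hR (funext fun i => Subtype.ext (hc i))
    constructor
    · obtain ⟨i, hi, hle⟩ := aux_lower hOnto hPSP R hne
      refine le_trans (csInf_le ⟨0, ?_⟩ ⟨i, hi, rfl⟩) hle
      rintro x ⟨j, _, rfl⟩
      exact (peak (R j).1).2.1
    · obtain ⟨i, hi, hle⟩ := aux_upper hOnto hPSP R hne
      refine le_trans hle (le_csSup ⟨1, ?_⟩ ⟨i, hi, rfl⟩)
      rintro x ⟨j, _, rfl⟩
      exact (peak (R j).1).2.2
end

section
/- Let n ≥ 3. If a social choice function f : S₀ⁿ → A is onto and pairwise strategy-proof, then f is tops-only. -/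
/-- Left-loving utility with peak `p`. -/
noncomputable def uL (p x : A) : ℝ := if x ≤ p then (x : ℝ) else -(x : ℝ)
/-- Right-loving utility with peak `p`. -/
noncomputable def uU (p x : A) : ℝ := if p ≤ x then -(x : ℝ) else (x : ℝ) - 2

/-- Preference represented by a utility function. -/
def prefOf (u : A → ℝ) : Pref :=
  ⟨fun x y => u y ≤ u x, fun a b => le_total (u b) (u a), fun _ _ _ h1 h2 => le_trans h2 h1⟩

theorem L_peak (p : A) : (prefOf (uL p)).IsPeak p := by
  intro a b h
  have hp0 := p.2.1
  have hp1 := p.2.2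
  have ha0 := a.2.1
  have ha1 := a.2.2
  have hb0 := b.2.1
  have hb1 := b.2.2
  simp only [Pref.P, prefOf, uL, ← Subtype.coe_le_coe, ← Subtype.coe_lt_coe] at *
  rcases h with ⟨h1, h2⟩ | ⟨h1, h2⟩ <;> constructor <;> split_ifs <;> linarith

theorem U_peak (p : A) : (prefOf (uU p)).IsPeak p := by
  intro a b h
  have hp0 := p.2.1
  have hp1 := p.2.2
  have ha0 := a.2.1
  have ha1 := a.2.2
  have hb0 := b.2.1
  have hb1 := b.2.2
  simp only [Pref.P, prefOf, uU, ← Subtype.coe_le_coe, ← Subtype.coe_lt_coe] at *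
  rcases h with ⟨h1, h2⟩ | ⟨h1, h2⟩ <;> constructor <;> split_ifs <;> linarith

theorem L_top {p a c : A} (h : (prefOf (uL p)).rel c a) (hap : a ≤ p) : a ≤ c ∧ c ≤ p := by
  have hp0 := p.2.1
  have hp1 := p.2.2
  have ha0 := a.2.1
  have ha1 := a.2.2
  have hb0 := c.2.1
  have hb1 := c.2.2
  simp only [prefOf, uL, ← Subtype.coe_le_coe] at *
  split_ifs at h <;> constructor <;> linarith

theorem U_top {p b c : A} (h : (prefOf (uU p)).rel c b) (hap : p ≤ b) : p ≤ c ∧ c ≤ b := by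
  have hp0 := p.2.1
  have hp1 := p.2.2
  have ha0 := b.2.1
  have ha1 := b.2.2
  have hb0 := c.2.1
  have hb1 := c.2.2
  simp only [prefOf, uU, ← Subtype.coe_le_coe] at *
  split_ifs at h <;> constructor <;> linarith

theorem peak_r {R : Pref} {p a c : A} (hp : R.IsPeak p) (h : R.rel a c) (hc : p ≤ c) : a ≤ c := by
  by_contra hlt
  exact (hp c a (Or.inl ⟨hc, not_le.mp hlt⟩)).2 h

theorem peak_l {R : Pref} {p a c : A} (hp : R.IsPeak p) (h : R.rel a c) (hc : c ≤ p) : c ≤ a := by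
  by_contra hlt
  exact (hp c a (Or.inr ⟨not_le.mp hlt, hc⟩)).2 h

theorem peak_unique {R : Pref} {p c : A} (hp : R.IsPeak p) (h : R.rel c p) : c = p :=
  le_antisymm (peak_r hp h le_rfl) (peak_l hp h le_rfl)

theorem peak_spec (R : S0) (h : R.1 ≠ R0) : R.1.IsPeak (peak R.1) := by
  have hs : SinglePeaked R.1 := R.2.resolve_right h
  unfold peak
  rw [dif_pos hs]
  exact hs.choose_spec

/-- L and U as elements of the domain. -/
noncomputable def LL (p : A) : S0 := ⟨prefOf (uL p), Or.inl ⟨p, L_peak p⟩⟩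
noncomputable def UU (p : A) : S0 := ⟨prefOf (uU p), Or.inl ⟨p, U_peak p⟩⟩

/-- The indifferent preference as an element of the domain. -/
def ZZ : S0 := ⟨R0, Or.inr rfl⟩

/-- Agents in `T` report `V`, others as in `R`. -/
def ovr {n : ℕ} (R : Fin n → S0) (T : Finset (Fin n)) (V : S0) : Fin n → S0 :=
  fun k => if k ∈ T then V else R k

theorem ovr_empty {n : ℕ} (R : Fin n → S0) (V : S0) : ovr R ∅ V = R := by
  funext k; simp [ovr]

theorem ovr_univ {n : ℕ} (R : Fin n → S0) (V : S0) : ovr R Finset.univ V = fun _ => V := by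
  funext k; simp [ovr]

theorem ovr_insert {n : ℕ} (R : Fin n → S0) (T : Finset (Fin n)) (V : S0) (j : Fin n) :
    ovr R (insert j T) V = Function.update (ovr R T V) j V := by
  funext k
  by_cases h : k = j
  · subst h; simp [ovr]
  · simp [ovr, h]

theorem sp_of_pairwise {n : ℕ} {f : (Fin n → S0) → A} (h : PairwiseSP f) : StrategyProof f := by
  intro R i V
  by_contra hc
  refine h {i} (by simp) (by simp) ⟨R, Function.update R i V, ?_, ?_, i, by simp, ?_⟩
  · intro k hk
    have : k ≠ i := by simpa using hk
    simp [this]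
  · intro k hk
    have : k = i := by simpa using hk
    subst this
    exact ((R k).1.total _ _).resolve_left hc
  · exact ⟨((R i).1.total _ _).resolve_left hc, hc⟩

theorem sp_back {n : ℕ} {f : (Fin n → S0) → A} (h : StrategyProof f) (R : Fin n → S0)
    (i : Fin n) (V : S0) : V.1.rel (f (Function.update R i V)) (f R) := by
  have := h (Function.update R i V) i (R i)
  simpa using this

theorem pref_refl (R : Pref) (a : A) : R.rel a a := (R.total a a).elim id id

theorem group_sp {n : ℕ} {f : (Fin n → S0) → A} (h : StrategyProof f) (V W : S0)
    (T : Finset (Fin n)) : ∀ R : Fin n → S0, V.1.rel (f (ovr R T V)) (f (ovr R T W)) := by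
  induction T using Finset.induction_on with
  | empty => intro R; rw [ovr_empty, ovr_empty]; exact pref_refl _ _
  | insert j T hj ih =>
    intro R
    have e : ∀ X Y : S0, Function.update (ovr R T Y) j X = ovr (Function.update R j X) T Y := by
      intro X Y
      funext k
      by_cases hk : k = j
      · subst hk; simp [ovr, hj]
      · simp [ovr, hk]
    rw [ovr_insert, ovr_insert]
    refine V.1.trans _ (f (Function.update (ovr R T W) j V)) _ ?_ ?_
    · rw [e, e]; exact ih _
    · have := sp_back h (Function.update (ovr R T W) j W) j V
      simpa using this

theorem unanimous {n : ℕ} {f : (Fin n → S0) → A} (hOnto : Onto f) (hP : PairwiseSP f)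
    (V : S0) (a : A) (hV : V.1.IsPeak a) (S : Finset (Fin n)) :
    (∃ k, k ∉ S) → f (ovr (fun _ => V) S ZZ) = a := by
  have hsp := sp_of_pairwise hP
  induction S using Finset.induction_on with
  | empty =>
    intro _
    obtain ⟨R, hR⟩ := hOnto a
    have key : ∀ T : Finset (Fin n), f (ovr R T V) = a := by
      intro T
      induction T using Finset.induction_on with
      | empty => rw [ovr_empty]; exact hR
      | insert j T hj ih =>
        rw [ovr_insert]
        have := sp_back hsp (ovr R T V) j V
        rw [ih] at this
        exact peak_unique hV this
    have := key Finset.univ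
    rw [ovr_univ] at this
    rw [ovr_empty]; exact this
  | insert j S hj ih =>
    rintro ⟨k, hk⟩
    have hkS : k ∉ S := fun h => hk (Finset.mem_insert_of_mem h)
    have hkj : k ≠ j := fun h => hk (by simp [h])
    have ih' := ih ⟨k, hkS⟩
    by_contra hne
    have hnr : ¬ V.1.rel (f (ovr (fun _ => V) (insert j S) ZZ)) a :=
      fun h => hne (peak_unique hV h)
    have hr := (V.1.total _ _).resolve_left hnr
    refine hP {j, k} (by simp) Finset.card_le_two ⟨ovr (fun _ => V) (insert j S) ZZ,
      ovr (fun _ => V) S ZZ, ?_, ?_, k, by simp, ?_⟩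
    · intro l hl
      have : l ≠ j := fun h => hl (by simp [h])
      simp [ovr, this]
    · intro l hl
      rw [ih']
      have e : l = j ∨ l = k := by simpa using hl
      rcases e with rfl | rfl
      · have : ovr (fun _ => V) (insert l S) ZZ l = ZZ := by
          simp [ovr]
        rw [this]; trivial
      · have : ovr (fun _ => V) (insert j S) ZZ l = V := by
          simp only [ovr]; rw [if_neg hk]
        rw [this]; exact hr
    · have : ovr (fun _ => V) (insert j S) ZZ k = V := by
        simp only [ovr]; rw [if_neg hk]
      rw [this, ih']; exact ⟨hr, hnr⟩

theorem move {n : ℕ} {f : (Fin n → S0) → A} (h : StrategyProof f) (R : Fin n → S0)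
    (T : Finset (Fin n)) {a b q q' : A} (haq : a < q) (hqb : q < b) (haq' : a < q') (hqb' : q' < b)
    (hL : f (ovr R T (LL q)) = a) (hU : f (ovr R T (UU q)) = b) :
    f (ovr R T (LL q')) = a ∧ f (ovr R T (UU q')) = b := by
  constructor
  · have h1 := group_sp h (LL q') (LL q) T R
    have h2 := group_sp h (LL q) (LL q') T R
    have h3 := group_sp h (UU q) (LL q') T R
    rw [hL] at h1 h2
    rw [hU] at h3
    generalize f (ovr R T (LL q')) = c at *
    obtain ⟨h4, h5⟩ := L_top h1 haq'.le
    rcases le_total c q with h6 | h6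
    · exact le_antisymm (peak_l (L_peak q) h2 h6) h4
    · exact absurd (peak_r (U_peak q) h3 h6) (not_le.mpr (h5.trans_lt hqb'))
  · have h1 := group_sp h (UU q') (UU q) T R
    have h2 := group_sp h (UU q) (UU q') T R
    have h3 := group_sp h (LL q) (UU q') T R
    rw [hU] at h1 h2
    rw [hL] at h3
    generalize f (ovr R T (UU q')) = c at *
    obtain ⟨h4, h5⟩ := U_top h1 hqb'.le
    rcases le_total q c with h6 | h6
    · exact le_antisymm h5 (peak_r (U_peak q) h2 h6)
    · exact absurd (peak_l (L_peak q) h3 h6) (not_le.mpr (haq'.trans_le h4))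

theorem add_one {n : ℕ} {f : (Fin n → S0) → A} (h : StrategyProof f) (R : Fin n → S0)
    (T : Finset (Fin n)) {a b q : A} (haq : a < q) (hqb : q < b)
    (hL : f (ovr R T (LL q)) = a) (hU : f (ovr R T (UU q)) = b)
    (j : Fin n) (hj : (R j).1 ≠ R0) :
    ∃ q', f (ovr R (insert j T) (LL q')) < q' ∧ q' < f (ovr R (insert j T) (UU q')) := by
  by_cases hjT : j ∈ T
  · rw [Finset.insert_eq_of_mem hjT]
    exact ⟨q, by rwa [hL], by rwa [hU]⟩
  have hp := peak_spec (R j) hj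
  obtain ⟨q', haq', hqb', hc⟩ : ∃ q', a < q' ∧ q' < b ∧
      (peak (R j).1 ≤ a ∨ b ≤ peak (R j).1 ∨ q' = peak (R j).1) := by
    by_cases h1 : peak (R j).1 ≤ a
    · exact ⟨q, haq, hqb, Or.inl h1⟩
    · by_cases h2 : b ≤ peak (R j).1
      · exact ⟨q, haq, hqb, Or.inr (Or.inl h2)⟩
      · exact ⟨_, not_le.mp h1, not_le.mp h2, Or.inr (Or.inr rfl)⟩
  obtain ⟨hL', hU'⟩ := move h R T haq hqb haq' hqb' hL hU
  have ej : ∀ V, ovr R T V j = R j := fun V => by simp [ovr, hjT]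
  have g1 := group_sp h (UU q') (LL q') (insert j T) R
  have g2 := group_sp h (LL q') (UU q') (insert j T) R
  have h1 := sp_back h (ovr R T (LL q')) j (LL q')
  have h2 := h (ovr R T (LL q')) j (LL q')
  rw [hL', ← ovr_insert] at h1 h2
  rw [ej] at h2
  have k1 := sp_back h (ovr R T (UU q')) j (UU q')
  have k2 := h (ovr R T (UU q')) j (UU q')
  rw [hU', ← ovr_insert] at k1 k2
  rw [ej] at k2
  refine ⟨q', ?_⟩
  generalize f (ovr R (insert j T) (LL q')) = c at *
  generalize f (ovr R (insert j T) (UU q')) = d at *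
  generalize peak (R j).1 = p at *
  obtain ⟨h4, h5⟩ := L_top h1 haq'.le
  obtain ⟨k4, k5⟩ := U_top k1 hqb'.le
  have cL : q' ≤ p → c = a := fun hq => le_antisymm (peak_l hp h2 (h5.trans hq)) h4
  have cU : p ≤ q' → d = b := fun hq => le_antisymm k5 (peak_r hp k2 (hq.trans k4))
  have fL : d = b → c < q' := by
    intro e
    refine lt_of_le_of_ne h5 fun ec => ?_
    rw [ec, e] at g1
    exact hqb'.ne' (peak_unique (U_peak q') g1)
  have fU : c = a → q' < d := by
    intro e
    refine lt_of_le_of_ne k4 fun ec => ?_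
    rw [← ec, e] at g2
    exact haq'.ne (peak_unique (L_peak q') g2)
  rcases le_total p q' with hpq | hpq
  · have e := cU hpq
    exact ⟨fL e, by rw [e]; exact hqb'⟩
  · have e := cL hpq
    exact ⟨by rw [e]; exact haq', fU e⟩

theorem no_gap {n : ℕ} {f : (Fin n → S0) → A} (hOnto : Onto f) (hP : PairwiseSP f)
    (R : Fin n → S0) (i : Fin n) (q : A) (hi : (R i).1 ≠ R0)
    (hL : f (ovr R {i} (LL q)) < q) (hU : q < f (ovr R {i} (UU q))) : False := by
  classical
  have hsp := sp_of_pairwise hP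
  have key : ∀ K : Finset (Fin n), (∀ k ∈ K, (R k).1 ≠ R0) → ∃ q',
      f (ovr R (K ∪ {i}) (LL q')) < q' ∧ q' < f (ovr R (K ∪ {i}) (UU q')) := by
    intro K
    induction K using Finset.induction_on with
    | empty => intro _; exact ⟨q, by simpa using hL, by simpa using hU⟩
    | insert j K hj ih =>
      intro hK
      obtain ⟨q1, h1, h2⟩ := ih fun k hk => hK k (Finset.mem_insert_of_mem hk)
      have := add_one hsp R (K ∪ {i}) h1 h2 rfl rfl j (hK j (Finset.mem_insert_self _ _))
      rwa [← Finset.insert_union] at this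
  obtain ⟨q', h1, -⟩ := key (Finset.univ.filter fun k => (R k).1 ≠ R0) (by simp)
  have hu := unanimous hOnto hP (LL q') q' (L_peak q')
    (Finset.univ.filter fun k => (R k).1 = R0) ⟨i, by simpa using hi⟩
  have e : ovr R ((Finset.univ.filter fun k => (R k).1 ≠ R0) ∪ {i}) (LL q') =
      ovr (fun _ => LL q') (Finset.univ.filter fun k => (R k).1 = R0) ZZ := by
    funext k
    by_cases hk : (R k).1 = R0
    · have hki : k ≠ i := by rintro rfl; exact hi hk
      have : R k = ZZ := Subtype.ext hk
      simp [ovr, this, hki]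
    · simp [ovr, hk]
  rw [e, hu] at h1
  exact lt_irrefl _ h1

theorem ovr_single {n : ℕ} (R : Fin n → S0) (i : Fin n) (V : S0) :
    ovr R {i} V = Function.update R i V := by
  funext k
  by_cases h : k = i
  · subst h; simp [ovr]
  · simp [ovr, h]

theorem one_aux {n : ℕ} {f : (Fin n → S0) → A} (hOnto : Onto f) (hP : PairwiseSP f)
    (R : Fin n → S0) (i : Fin n) (V : S0) (hi : (R i).1 ≠ R0) (p : A)
    (hp : (R i).1.IsPeak p) (hpV : V.1.IsPeak p) :
    ¬ f R < f (Function.update R i V) := by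
  intro hlt
  have hsp := sp_of_pairwise hP
  have h1 := hsp R i V
  have h2 := sp_back hsp R i V
  have hb : p < f (Function.update R i V) :=
    not_le.mp fun hh => absurd (peak_l hp h1 hh) (not_le.mpr hlt)
  have ha : f R < p := not_le.mp fun hh => absurd (peak_r hpV h2 hh) (not_le.mpr hlt)
  refine no_gap hOnto hP R i p hi ?_ ?_
  · rw [ovr_single]
    have e1 := hsp R i (LL p)
    have e2 := sp_back hsp R i (LL p)
    obtain ⟨-, h4⟩ := L_top e2 ha.le
    exact (peak_l hp e1 h4).trans_lt ha
  · rw [ovr_single]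
    have e1 := hsp (Function.update R i V) i (UU p)
    have e2 := sp_back hsp (Function.update R i V) i (UU p)
    simp only [Function.update_idem, Function.update_self] at e1 e2
    obtain ⟨h4, -⟩ := U_top e2 hb.le
    exact hb.trans_le (peak_r hpV e1 h4)

theorem one_step {n : ℕ} {f : (Fin n → S0) → A} (hOnto : Onto f) (hP : PairwiseSP f)
    (R : Fin n → S0) (i : Fin n) (V : S0) (hi : (R i).1 ≠ R0) (hV : V.1 ≠ R0)
    (e : peak (R i).1 = peak V.1) : f R = f (Function.update R i V) := by
  have hp := peak_spec (R i) hi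
  have hpV := peak_spec V hV
  rw [← e] at hpV
  refine le_antisymm (not_lt.mp ?_) (not_lt.mp (one_aux hOnto hP R i V hi _ hp hpV))
  have := one_aux hOnto hP (Function.update R i V) i (R i) (by simpa using hV) (peak (R i).1)
    (by simpa using hpV) hp
  simpa using this

/-- For n ≥ 3, every onto and pairwise strategy-proof SCF is
tops-only. -/
theorem stmt_7 (n : ℕ) (hn : 3 ≤ n) (f : (Fin n → S0) → A)
    (hOnto : Onto f) (hPSP : PairwiseSP f) : TopsOnly f := by
  intro R R' h0 hpk
  have key : ∀ K : Finset (Fin n), f R = f (fun k => if k ∈ K then R' k else R k) := by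
    intro K
    induction K using Finset.induction_on with
    | empty => simp
    | insert j K hj ih =>
      have e : (fun k => if k ∈ insert j K then R' k else R k) =
          Function.update (fun k => if k ∈ K then R' k else R k) j (R' j) := by
        funext k
        by_cases hk : k = j
        · subst hk; simp
        · simp [hk]
      rw [ih, e]
      by_cases hR : (R j).1 = R0
      · have : R' j = R j := Subtype.ext (((h0 j).1 hR).trans hR.symm)
        congr 1
        rw [this, eq_comm, Function.update_eq_self_iff]
        simp [hj]
      · apply one_step hOnto hPSP
        · simpa [hj] using hR
        · exact fun h => hR ((h0 j).2 h)
        · simpa [hj] using hpk j hR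
  simpa using key Finset.univ
end
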